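/- Let H and A be Hermitian matrices of the same finite size and β > 0, and let ⟨·⟩ be the Gibbs expectation of H at inverse temperature β. Then the Gibbs expectation of the double commutator equals the Duhamel norm squared of the commutator, ⟨[A,[βH,A]]⟩ = ⟨[βH,A] | [βH,A]⟩, and in particular ⟨[A,[βH,A]]⟩ is a non-negative real number. -/

import Mathlib

open Matrix

noncomputable section

/-- Complex-valued Gibbs expectation `⟨A⟩ = Tr(e^{-βH} A)/Tr(e^{-βH})`. -/
def gibbsC {n : Type*} [Fintype n] [DecidableEq n] (β : ℝ) (H A : Matrix n n ℂ) : ℂ :=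
  (NormedSpace.exp ((-β) • H) * A).trace / (NormedSpace.exp ((-β) • H)).trace

/-- Real-valued Gibbs expectation (real part; for Hermitian observables this is `⟨A⟩`). -/
def gibbs {n : Type*} [Fintype n] [DecidableEq n] (β : ℝ) (H A : Matrix n n ℂ) : ℝ :=
  (gibbsC β H A).re

/-- Complex-valued Duhamel–Kubo–Bogolyubov product
`⟨A|B⟩ = ∫_0^1 ⟨e^{tβH} A* e^{-tβH} B⟩ dt`. -/
def duhamelC {n : Type*} [Fintype n] [DecidableEq n] (β : ℝ) (H A B : Matrix n n ℂ) : ℂ :=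
  ∫ t in (0:ℝ)..1,
    gibbsC β H (NormedSpace.exp ((t * β) • H) * Aᴴ *
      NormedSpace.exp ((-(t * β)) • H) * B)

/-- Real-valued Duhamel–Kubo–Bogolyubov product. -/
def duhamel {n : Type*} [Fintype n] [DecidableEq n] (β : ℝ) (H A B : Matrix n n ℂ) : ℝ :=
  (duhamelC β H A B).re

section helpers

open scoped Matrix.Norms.Operator ComplexOrder

theorem aux_deriv {n : Type*} [Fintype n] [DecidableEq n] (E K A C : Matrix n n ℂ) (t : ℝ) :
    HasDerivAt (fun t : ℝ =>
      (E * (NormedSpace.exp (t • K) * A * NormedSpace.exp ((-t) • K) * C)).trace)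
      (E * (NormedSpace.exp (t • K) * (K * A - A * K) * NormedSpace.exp ((-t) • K) * C)).trace
      t := by
  have h1 : HasDerivAt (fun u : ℝ => NormedSpace.exp (u • K)) (NormedSpace.exp (t • K) * K) t :=
    hasDerivAt_exp_smul_const K t
  have h2 : HasDerivAt (fun u : ℝ => NormedSpace.exp (u • (-K)))
      ((-K) * NormedSpace.exp (t • (-K))) t :=
    hasDerivAt_exp_smul_const' (-K) t
  simp only [smul_neg, ← neg_smul] at h2
  have h3 := (((h1.mul_const A).mul h2).mul_const C).const_mul E
  have h4 := ((LinearMap.toContinuousLinearMap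
    (Matrix.traceLinearMap n ℝ ℂ)).hasFDerivAt.comp_hasDerivAt t h3)
  refine h4.congr_deriv ?_
  change Matrix.trace _ = _
  congr 1
  noncomm_ring

theorem aux_exp_add {n : Type*} [Fintype n] [DecidableEq n] (K : Matrix n n ℂ) (a b : ℝ) :
    NormedSpace.exp (a • K) * NormedSpace.exp (b • K) = NormedSpace.exp ((a + b) • K) := by
  rw [add_smul]
  exact (Matrix.exp_add_of_commute _ _
    (((Commute.refl K).smul_left a).smul_right b)).symm

theorem aux_herm {n : Type*} [Fintype n] [DecidableEq n] (K : Matrix n n ℂ)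
    (hK : K.IsHermitian) (a : ℝ) : (NormedSpace.exp (a • K))ᴴ = NormedSpace.exp (a • K) := by
  rw [← Matrix.exp_conjTranspose, Matrix.conjTranspose_smul, hK.eq, star_trivial]

theorem aux_nonneg {n : Type*} [Fintype n] [DecidableEq n] (K C : Matrix n n ℂ)
    (hK : K.IsHermitian) (a b : ℝ) :
    0 ≤ (NormedSpace.exp (a • K) * Cᴴ * NormedSpace.exp (b • K) * C).trace := by
  have h := (Matrix.posSemidef_conjTranspose_mul_self
    (NormedSpace.exp ((b / 2) • K) * C * NormedSpace.exp ((a / 2) • K))).trace_nonneg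
  convert h using 1
  rw [Matrix.conjTranspose_mul, Matrix.conjTranspose_mul, aux_herm K hK, aux_herm K hK]
  have ha := aux_exp_add K (a / 2) (a / 2)
  have hb := aux_exp_add K (b / 2) (b / 2)
  rw [add_halves] at ha hb
  rw [← ha, ← hb]
  simp only [Matrix.mul_assoc]
  rw [Matrix.trace_mul_comm]
  simp only [Matrix.mul_assoc]

theorem aux_Z {n : Type*} [Fintype n] [DecidableEq n] (K : Matrix n n ℂ)
    (hK : K.IsHermitian) (a : ℝ) : 0 ≤ (NormedSpace.exp (a • K)).trace := by
  have h := aux_nonneg K 1 hK a 0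
  simpa using h

theorem aux_integrand {n : Type*} [Fintype n] [DecidableEq n] (β : ℝ) (H C : Matrix n n ℂ)
    (hH : H.IsHermitian) (t : ℝ) :
    0 ≤ gibbsC β H (NormedSpace.exp ((t * β) • H) * Cᴴ *
      NormedSpace.exp ((-(t * β)) • H) * C) := by
  unfold gibbsC
  have h1 := aux_nonneg H C hH (-β + t * β) (-(t * β))
  have h2 := aux_Z H hH (-β)
  rw [← aux_exp_add] at h1
  simp only [Matrix.mul_assoc] at h1 ⊢
  rw [div_eq_mul_inv]
  refine mul_nonneg h1 ?_
  exact inv_nonneg.mpr h2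

theorem aux_cont {n : Type*} [Fintype n] [DecidableEq n] (E K A C : Matrix n n ℂ) :
    Continuous (fun t : ℝ =>
      (E * (NormedSpace.exp (t • K) * A * NormedSpace.exp ((-t) • K) * C)).trace) :=
  continuous_iff_continuousAt.mpr fun t => (aux_deriv E K A C t).continuousAt

theorem aux_eq {n : Type*} [Fintype n] [DecidableEq n]
    (β : ℝ) (H A : Matrix n n ℂ) (hH : H.IsHermitian) (hA : A.IsHermitian) :
    gibbsC β H ⁅A, ⁅β • H, A⁆⁆ = duhamelC β H ⁅β • H, A⁆ ⁅β • H, A⁆ := by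
  have hK : (β • H)ᴴ = β • H := by
    rw [Matrix.conjTranspose_smul, hH.eq, star_trivial]
  have hC : (⁅β • H, A⁆)ᴴ = -⁅β • H, A⁆ := by
    rw [Ring.lie_def, Matrix.conjTranspose_sub, Matrix.conjTranspose_mul,
      Matrix.conjTranspose_mul, hK, hA.eq, neg_sub]
  unfold duhamelC gibbsC
  rw [hC]
  have e1 : ∀ t : ℝ, (t * β) • H = t • (β • H) := fun t => mul_smul _ _ _
  have e2 : ∀ t : ℝ, (-(t * β)) • H = (-t) • (β • H) := fun t => by
    rw [← neg_mul, mul_smul]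
  have e3 : (-β) • H = (-1 : ℝ) • (β • H) := by rw [smul_smul]; simp
  simp only [e1, e2, e3]
  generalize hKd : β • H = K
  generalize hCd : ⁅K, A⁆ = C
  have hCd' : K * A - A * K = C := by rw [← hCd, Ring.lie_def]
  rw [intervalIntegral.integral_div]
  congr 1
  have hI := intervalIntegral.integral_eq_sub_of_hasDerivAt (a := 0) (b := 1)
    (fun t _ => aux_deriv (NormedSpace.exp ((-1 : ℝ) • K)) K A C t)
    ((aux_cont _ K _ C).intervalIntegrable 0 1)
  rw [hCd'] at hI
  simp only [mul_neg, neg_mul, Matrix.trace_neg, intervalIntegral.integral_neg]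
  rw [hI]
  have h0 := aux_exp_add K (-1) 1
  simp only [neg_add_cancel, zero_smul, NormedSpace.exp_zero] at h0
  simp only [neg_zero, zero_smul, NormedSpace.exp_zero, one_mul, mul_one]
  rw [Ring.lie_def, mul_sub, Matrix.trace_sub, neg_sub]
  congr 1
  simp only [← Matrix.mul_assoc, h0, one_mul]
  rw [Matrix.mul_assoc A, Matrix.trace_mul_comm]

theorem aux_duhamel {n : Type*} [Fintype n] [DecidableEq n]
    (β : ℝ) (H C : Matrix n n ℂ) (hH : H.IsHermitian) :
    (duhamelC β H C C).im = 0 ∧ 0 ≤ (duhamelC β H C C).re := by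
  have h : ∀ t : ℝ, gibbsC β H (NormedSpace.exp ((t * β) • H) * Cᴴ *
      NormedSpace.exp ((-(t * β)) • H) * C) =
      (((gibbsC β H (NormedSpace.exp ((t * β) • H) * Cᴴ *
      NormedSpace.exp ((-(t * β)) • H) * C)).re : ℝ) : ℂ) := fun t => by
    have := Complex.le_def.mp (aux_integrand β H C hH t)
    apply Complex.ext
    · simp
    · simpa using this.2.symm
  unfold duhamelC
  rw [intervalIntegral.integral_congr (fun t _ => h t), intervalIntegral.integral_ofReal]
  refine ⟨Complex.ofReal_im _, ?_⟩
  rw [Complex.ofReal_re]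
  refine intervalIntegral.integral_nonneg zero_le_one fun t _ => ?_
  simpa using (Complex.le_def.mp (aux_integrand β H C hH t)).1

end helpers

theorem stmt8 {n : Type*} [Fintype n] [DecidableEq n] [Nonempty n]
    (β : ℝ) (hβ : 0 < β) (H A : Matrix n n ℂ)
    (hH : H.IsHermitian) (hA : A.IsHermitian) :
    gibbsC β H ⁅A, ⁅β • H, A⁆⁆ = duhamelC β H ⁅β • H, A⁆ ⁅β • H, A⁆ ∧
    (gibbsC β H ⁅A, ⁅β • H, A⁆⁆).im = 0 ∧ 0 ≤ (gibbsC β H ⁅A, ⁅β • H, A⁆⁆).re := by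
  have h := aux_eq β H A hH hA
  refine ⟨h, ?_⟩
  rw [h]
  exact aux_duhamel β H _ hH
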